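/- There exist constants c, C > 0 such that for all p ∈ (0,1): c·p^(−3/2) ≤ f(K₃,p) ≤ C·p^(−3/2), c·p^(−2) ≤ f(K₄,p) ≤ C·p^(−2), and c·p^(−8/3) ≤ f(K₅,p) ≤ C·p^(−8/3). -/

import Mathlib

open scoped Classical

namespace OnlineRamseyGame

/-- A valid Builder strategy: it never builds a loop, and along any play the
edges built are pairwise distinct. -/
def ValidBuilder {V : Type*} (B : List Bool → Sym2 V) : Prop :=
  (∀ h : List Bool, ¬ (B h).IsDiag) ∧
  ∀ h : List Bool, ∀ i : ℕ, i < h.length → B (h.take i) ≠ B h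

/-- The history (as a list) of the first `t` values of the color sequence `x`. -/
def histSeq (x : ℕ → Bool) (t : ℕ) : List Bool := (List.range t).map x

/-- Extend a finite color sequence to an infinite one (by `false`). -/
def extSeq {N : ℕ} (x : Fin N → Bool) : ℕ → Bool :=
  fun t => if h : t < N then x ⟨t, h⟩ else false

/-- The probability of the outcome `x` when each turn is independently `true`
with probability `p` and `false` with probability `1 - p`. -/
noncomputable def weight (p : ℝ) {N : ℕ} (x : Fin N → Bool) : ℝ :=
  ∏ i, if x i then p else 1 - p

/-- The graph of successful queries (within the first `N` queries) contains a
copy of `H`. -/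
def ContainsCopy {V : Type*} (H : SimpleGraph V) (edge : ℕ → Sym2 ℕ)
    (x : ℕ → Bool) (N : ℕ) : Prop :=
  ∃ f : V → ℕ, Function.Injective f ∧
    ∀ u v : V, H.Adj u v → ∃ t, t < N ∧ edge t = s(f u, f v) ∧ x t = true

/-- The probability that strategy `Q` finds a copy of `H` within `N` queries in
the Subgraph Query Game with parameter `p`. -/
noncomputable def queryProb {V : Type*} (H : SimpleGraph V)
    (Q : List Bool → Sym2 ℕ) (N : ℕ) (p : ℝ) : ℝ :=
  ∑ x : Fin N → Bool, weight p x *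
    (if ContainsCopy H (fun t => Q (histSeq (extSeq x) t)) (extSeq x) N then 1 else 0)

/-- `f(H,p)`: the least `N` such that some valid strategy finds a copy of `H`
within `N` queries with probability at least `1/2`. -/
noncomputable def fQuery {V : Type*} (H : SimpleGraph V) (p : ℝ) : ℕ :=
  sInf {N | ∃ Q : List Bool → Sym2 ℕ, ValidBuilder Q ∧ (1 : ℝ) / 2 ≤ queryProb H Q N p}

/-- The complete graph on `m` vertices. -/
abbrev K (m : ℕ) : SimpleGraph (Fin m) := ⊤

/- Upper bounds. For `K₃`, Builder collects about `1 / √p` neighbours of one vertex and then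
queries the pairs among them. For `K₄`, Builder collects about `1 / p` neighbours of one vertex
and looks for a triangle among them: at each of about `1 / p` of these neighbours, two disjoint
stars of about `1 / p` queries find one leg each, and the pair that would close the triangle is
queried. For `K₅`, Builder collects about `p ^ (-5 / 3)` neighbours of one vertex and makes about
`1 / p` attempts at finding a `K₄` among them; an attempt consists of collecting about
`p ^ (-2 / 3)` neighbours of a new vertex and searching for a triangle there as before, now with
stars of size about `p ^ (-2 / 3)`.

Lower bounds. If a copy of `H` appears, its edges were found in some order. Revealing a sublist of
them in that order, each edge with an endpoint that is not yet embedded offers at most `2 N`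
choices, while an edge between embedded vertices is a single pair; every edge costs a factor `p`.
Hence a sublist of length `l` with at most `a` edges of the first kind bounds the probability by a
constant times `N ^ a * p ^ l`, and `N` is at least of order `p ^ (-l / a)`. In `K₃` all orders
have `a ≤ 2` with `l = 3`. In `K₄` and `K₅`, omit the at most two edges that precede the first
edge `g` disjoint from an earlier one and that meet `g`: then the first edge and `g` both bring in
two new vertices, so that `a = 2`, `l = 4` and `a = 3`, `l = 8` respectively. -/

open scoped SimpleGraph
open SimpleGraph (fromEdgeSet fromEdgeSet_mono fromEdgeSet_adj)

section Probability

/-- The probability that the history of the first `n` answers has the property `P`, when each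
answer is independently `true` with probability `p`. -/
noncomputable def prob (p : ℝ) : ℕ → (List Bool → Prop) → ℝ
  | 0, P => if P [] then 1 else 0
  | n + 1, P =>
    p * prob p n (fun h => P (true :: h)) + (1 - p) * prob p n (fun h => P (false :: h))

theorem sum_weight_mul_ite (p : ℝ) (n : ℕ) (P : List Bool → Prop) :
    ∑ x : Fin n → Bool, weight p x * (if P (List.ofFn x) then 1 else 0) = prob p n P := by
  induction n generalizing P with
  | zero => simp [prob, weight]
  | succ n ih =>
    rw [prob, ← ih, ← ih, ← (Fin.consEquiv fun _ : Fin (n + 1) => Bool).sum_comp,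
      Fintype.sum_prod_type, Fintype.sum_bool, Finset.mul_sum, Finset.mul_sum]
    simp only [weight, Fin.consEquiv_apply, Fin.prod_univ_succ, Fin.cons_zero, Fin.cons_succ,
      List.ofFn_succ, mul_assoc, if_true, Bool.false_eq_true, if_false]

theorem prob_const (p : ℝ) (n : ℕ) (P : Prop) : prob p n (fun _ => P) = if P then 1 else 0 := by
  induction n with
  | zero => rfl
  | succ n ih => rw [prob, ih]; ring

variable {p : ℝ}

theorem prob_mono (hp : p ∈ unitInterval) (n : ℕ) {P P' : List Bool → Prop}
    (h : ∀ l, P l → P' l) : prob p n P ≤ prob p n P' := by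
  induction n generalizing P P' with
  | zero =>
    unfold prob
    split_ifs with h₁ h₂
    exacts [le_rfl, absurd (h [] h₁) h₂, zero_le_one, le_rfl]
  | succ n ih =>
    unfold prob
    gcongr
    exacts [hp.1, ih fun l => h _, sub_nonneg.2 hp.2, ih fun l => h _]

theorem prob_mem_unitInterval (hp : p ∈ unitInterval) (n : ℕ) (P : List Bool → Prop) :
    prob p n P ∈ unitInterval := by
  have h0 := prob_mono hp n (P := fun _ => False) (P' := P) (by simp)
  have h1 := prob_mono hp n (P := P) (P' := fun _ => True) (by simp)
  rw [prob_const, if_neg not_false] at h0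
  rw [prob_const, if_pos trivial] at h1
  exact ⟨h0, h1⟩

theorem prob_or_le (hp : p ∈ unitInterval) (n : ℕ) (P P' : List Bool → Prop) :
    prob p n (fun l => P l ∨ P' l) ≤ prob p n P + prob p n P' := by
  induction n generalizing P P' with
  | zero =>
    by_cases h : P [] <;> by_cases h' : P' [] <;> simp [prob, h, h']
  | succ n ih =>
    unfold prob
    have htrue := mul_le_mul_of_nonneg_left
      (ih (fun l => P (true :: l)) (fun l => P' (true :: l))) hp.1
    have hfalse := mul_le_mul_of_nonneg_left
      (ih (fun l => P (false :: l)) (fun l => P' (false :: l))) (sub_nonneg.2 hp.2)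
    linarith

theorem prob_exists_le (hp : p ∈ unitInterval) (n : ℕ) {ι : Type*} (s : Finset ι)
    (P : ι → List Bool → Prop) :
    prob p n (fun l => ∃ i ∈ s, P i l) ≤ ∑ i ∈ s, prob p n (P i) := by
  induction s using Finset.induction_on with
  | empty => simp [prob_const]
  | insert a s ha ih =>
    simp only [Finset.exists_mem_insert, Finset.sum_insert ha]
    exact (prob_or_le hp n _ _).trans (by gcongr)

theorem prob_mono_length (hp : p ∈ unitInterval) {P : List Bool → Prop}
    (h : ∀ l b, P l → P (l ++ [b])) {m n : ℕ} (hmn : m ≤ n) : prob p m P ≤ prob p n P := by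
  suffices succ : ∀ (n : ℕ) (P : List Bool → Prop), (∀ l b, P l → P (l ++ [b])) →
      prob p n P ≤ prob p (n + 1) P from
    monotone_nat_of_le_succ (fun n => succ n P h) hmn
  intro n
  induction n with
  | zero =>
    intro P h
    have cons (b : Bool) : prob p 0 P ≤ prob p 0 (fun l => P (b :: l)) := by
      have := h [] b
      unfold prob
      split_ifs <;> simp_all
    rw [prob.eq_2]
    nlinarith [cons true, cons false, hp.1, hp.2]
  | succ n ih =>
    intro P h
    rw [prob.eq_2 _ _ n, prob.eq_2]
    gcongr
    exacts [hp.1, ih _ fun l b => h (_ :: l) b, sub_nonneg.2 hp.2, ih _ fun l b => h (_ :: l) b]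

end Probability

section BinomialTail

/-- The probability that a binomial random variable with parameters `n` and `p` is at least
`k`. -/
noncomputable def binomTail (p : ℝ) (n k : ℕ) : ℝ := prob p n fun h => k ≤ h.count true

variable {p : ℝ}

theorem binomTail_mem_unitInterval (hp : p ∈ unitInterval) (n k : ℕ) :
    binomTail p n k ∈ unitInterval :=
  prob_mem_unitInterval hp n _

theorem binomTail_zero_right (p : ℝ) (n : ℕ) : binomTail p n 0 = 1 := by
  simp [binomTail, prob_const]

theorem binomTail_zero_succ (p : ℝ) (k : ℕ) : binomTail p 0 (k + 1) = 0 := by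
  simp [binomTail, prob]

theorem binomTail_succ_succ (p : ℝ) (n k : ℕ) :
    binomTail p (n + 1) (k + 1) = p * binomTail p n k + (1 - p) * binomTail p n (k + 1) := by
  simp [binomTail, prob]

theorem binomTail_one (p : ℝ) (n : ℕ) : binomTail p n 1 = 1 - (1 - p) ^ n := by
  induction n with
  | zero => rw [binomTail_zero_succ, pow_zero, sub_self]
  | succ n ih => rw [binomTail_succ_succ, ih, binomTail_zero_right]; ring

theorem div_one_add_le_binomTail_one (hp : p ∈ unitInterval) {n : ℕ} {z : ℝ} (hz : 0 ≤ z)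
    (hzn : z ≤ n * p) : z / (1 + z) ≤ binomTail p n 1 := by
  have hpow : (1 - p) ^ n * (1 + z) ≤ 1 := by
    calc (1 - p) ^ n * (1 + z) ≤ (1 - p) ^ n * (1 + p) ^ n := by
          gcongr
          · exact pow_nonneg (sub_nonneg.2 hp.2) n
          · linarith [one_add_mul_le_pow (by linarith [hp.1] : -2 ≤ p) n]
      _ = (1 - p ^ 2) ^ n := by rw [← mul_pow]; ring_nf
      _ ≤ 1 := pow_le_one₀ (by nlinarith [hp.1, hp.2]) (by nlinarith [hp.1])
  rw [binomTail_one, div_le_iff₀ (by linarith)]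
  linarith

/- Markov's inequality for `2 ^ (-X)`, `X` binomial: `E[2 ^ (-X)] = (1 - p / 2) ^ n`. -/
theorem one_sub_le_binomTail (hp : p ∈ unitInterval) (n k : ℕ) :
    1 - 2 ^ k * (1 - p / 2) ^ n ≤ binomTail p n k := by
  have hhalf : 0 ≤ 1 - p / 2 := by linarith [hp.2]
  induction n generalizing k with
  | zero =>
    cases k with
    | zero => simp [binomTail_zero_right]
    | succ k => simpa [binomTail_zero_succ] using one_le_pow₀ (by norm_num : (1 : ℝ) ≤ 2)
  | succ n ih =>
    cases k with
    | zero => simp only [binomTail_zero_right]; have := pow_nonneg hhalf (n + 1); linarith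
    | succ k =>
      rw [binomTail_succ_succ]
      have htrue := mul_le_mul_of_nonneg_left (ih k) hp.1
      have hfalse := mul_le_mul_of_nonneg_left (ih (k + 1)) (sub_nonneg.2 hp.2)
      rw [pow_succ (2 : ℝ)] at hfalse ⊢
      rw [pow_succ (1 - p / 2)]
      linear_combination htrue + hfalse

theorem seven_eighths_le_binomTail (hp : p ∈ unitInterval) {n k : ℕ}
    (hn : 2 * (k : ℝ) + 6 ≤ p * n) : 7 / 8 ≤ binomTail p n k := by
  have hhalf : 0 ≤ 1 - p / 2 := by linarith [hp.2]
  have hexp : 2 ^ (k + 3) * (1 - p / 2) ^ n ≤ (1 : ℝ) := by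
    calc 2 ^ (k + 3) * (1 - p / 2) ^ n
        ≤ Real.exp 1 ^ (k + 3) * Real.exp (-(p / 2)) ^ n := by
          gcongr
          · linarith [Real.add_one_le_exp 1]
          · exact Real.one_sub_le_exp_neg _
      _ = Real.exp (k + 3 - p * n / 2) := by
          rw [← Real.exp_nat_mul, ← Real.exp_nat_mul, ← Real.exp_add]
          push_cast
          ring_nf
      _ ≤ 1 := Real.exp_le_one_iff.2 (by linarith)
  rw [pow_add] at hexp
  linarith [one_sub_le_binomTail hp n k]

end BinomialTail

section Strategies

variable {V W : Type*}

/-- The pairs queried by the strategy `Q` along the history `h` that turned out to be edges, in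
the order in which they were queried. -/
def successes : (List Bool → Sym2 V) → List Bool → List (Sym2 V)
  | _, [] => []
  | Q, true :: h => Q [] :: successes (fun l => Q (true :: l)) h
  | Q, false :: h => successes (fun l => Q (false :: l)) h

theorem mem_successes {Q : List Bool → Sym2 V} {h : List Bool} {e : Sym2 V} :
    e ∈ successes Q h ↔ ∃ t < h.length, Q (h.take t) = e ∧ h[t]? = some true := by
  induction h generalizing Q with
  | nil => simp [successes]
  | cons b h ih =>
    cases b <;> simp only [successes, List.mem_cons, ih, List.length_cons, Nat.exists_lt_succ_left]
      <;> simp [eq_comm]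

theorem successes_append (Q : List Bool → Sym2 V) (h h' : List Bool) :
    successes Q (h ++ h') = successes Q h ++ successes (fun l => Q (h ++ l)) h' := by
  induction h generalizing Q with
  | nil => rfl
  | cons b h ih => cases b <;> simp [successes, ih]

theorem isContained_fromEdgeSet_iff {H : SimpleGraph V} {E : Set (Sym2 W)} :
    H ⊑ fromEdgeSet E ↔
      ∃ f : V → W, Function.Injective f ∧ ∀ u v, H.Adj u v → s(f u, f v) ∈ E := by
  constructor
  · rintro ⟨f⟩
    exact ⟨f, f.injective, fun u v huv =>
      ((fromEdgeSet_adj _).1 (f.toHom.map_adj huv)).1⟩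
  · rintro ⟨f, hf, hadj⟩
    exact ⟨⟨⟨f, fun {u v} huv =>
      (fromEdgeSet_adj _).2 ⟨hadj u v huv, hf.ne huv.ne⟩⟩, hf⟩⟩

theorem histSeq_extSeq {N : ℕ} (x : Fin N → Bool) {t : ℕ} (ht : t ≤ N) :
    histSeq (extSeq x) t = (List.ofFn x).take t := by
  apply List.ext_getElem
  · simpa [histSeq] using ht
  · intro i hi _
    have hit : i < t := by simpa [histSeq] using hi
    simp [histSeq, extSeq, hit.trans_le ht]

theorem containsCopy_iff (H : SimpleGraph V) (Q : List Bool → Sym2 ℕ) {N : ℕ} (x : Fin N → Bool) :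
    ContainsCopy H (fun t => Q (histSeq (extSeq x) t)) (extSeq x) N ↔
      H ⊑ fromEdgeSet {e | e ∈ successes Q (List.ofFn x)} := by
  rw [isContained_fromEdgeSet_iff]
  refine exists_congr fun f => and_congr_right fun _ => forall₂_congr fun u v => imp_congr_right
    fun _ => ?_
  rw [Set.mem_ofPred_eq, mem_successes, List.length_ofFn]
  refine exists_congr fun t => and_congr_right fun ht => ?_
  simp [histSeq_extSeq x ht.le, extSeq, ht]

theorem queryProb_eq_prob (H : SimpleGraph V) (Q : List Bool → Sym2 ℕ) (N : ℕ) (p : ℝ) :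
    queryProb H Q N p =
      prob p N fun h => H ⊑ fromEdgeSet {e | e ∈ successes Q h} := by
  simp only [queryProb, containsCopy_iff, ← sum_weight_mul_ite]

theorem queryProb_zero {H : SimpleGraph V} (hH : H ≠ ⊥) (Q : List Bool → Sym2 ℕ) (p : ℝ) :
    queryProb H Q 0 p = 0 := by
  obtain ⟨u, v, huv⟩ := SimpleGraph.ne_bot_iff_exists_adj.1 hH
  rw [queryProb_eq_prob, prob, if_neg]
  intro hcopy
  obtain ⟨f, -, hf⟩ := isContained_fromEdgeSet_iff.1 hcopy
  simpa [successes] using hf u v huv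

theorem validBuilder_iff {Q : List Bool → Sym2 V} :
    ValidBuilder Q ↔ ¬ (Q []).IsDiag ∧
      ∀ b, ValidBuilder (fun h => Q (b :: h)) ∧ ∀ h, Q (b :: h) ≠ Q [] := by
  constructor
  · rintro ⟨hdiag, hne⟩
    refine ⟨hdiag [], fun b => ⟨⟨fun h => hdiag _, fun h i hi => ?_⟩, fun h => ?_⟩⟩
    · simpa using hne (b :: h) (i + 1) (by simpa using hi)
    · simpa using (hne (b :: h) 0 (by simp)).symm
  · rintro ⟨hdiag, htail⟩
    refine ⟨fun h => ?_, fun h i hi => ?_⟩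
    · cases h with
      | nil => exact hdiag
      | cons b h => exact (htail b).1.1 h
    · cases h with
      | nil => simp at hi
      | cons b h =>
        cases i with
        | zero => exact ((htail b).2 h).symm
        | succ i => exact (htail b).1.2 h i (by simpa using hi)

theorem exists_validBuilder_notMem (S : Finset (Sym2 ℕ)) :
    ∃ B : List Bool → Sym2 ℕ, ValidBuilder B ∧ ∀ h, B h ∉ S := by
  have hinj : Function.Injective fun n : ℕ => s(0, n + 1) := fun m n h => by simpa using h
  obtain ⟨M, hM⟩ : ∃ M, ∀ n ≥ M, s(0, n + 1) ∉ S := by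
    have := hinj.tendsto_cofinite.eventually S.finite_toSet.eventually_cofinite_notMem
    simpa [Nat.cofinite_eq_atTop] using this
  refine ⟨fun h => s(0, M + h.length + 1), ⟨fun h => by simp, fun h i hi heq => ?_⟩,
    fun h => hM _ (by omega)⟩
  simp only [List.length_take, Sym2.congr_right] at heq
  omega

end Strategies

/-- The strategy that starts with the query `e` and continues with `B₁` after a success and with
`B₀` after a failure. -/
def branch {V : Type*} (e : Sym2 V) (B₁ B₀ : List Bool → Sym2 V) : List Bool → Sym2 V
  | [] => e
  | true :: h => B₁ h
  | false :: h => B₀ h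

theorem ValidBuilder.branch {V : Type*} {e : Sym2 V} {B₁ B₀ : List Bool → Sym2 V}
    (he : ¬ e.IsDiag) (h₁ : ValidBuilder B₁) (h₀ : ValidBuilder B₀) (hne₁ : ∀ h, B₁ h ≠ e)
    (hne₀ : ∀ h, B₀ h ≠ e) : ValidBuilder (branch e B₁ B₀) :=
  validBuilder_iff.2 ⟨he, fun b => by cases b; exacts [⟨h₀, hne₀⟩, ⟨h₁, hne₁⟩]⟩

/-- When the pairs in `S` have already been queried and those in `G` are known to be edges,
Builder has a strategy for completing a copy of `H` within `n` further queries with probability at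
least `r`. -/
def Winnable {V : Type*} (p : ℝ) (H : SimpleGraph V) (n : ℕ) (S : Finset (Sym2 ℕ))
    (G : Set (Sym2 ℕ)) (r : ℝ) : Prop :=
  ∃ B : List Bool → Sym2 ℕ, ValidBuilder B ∧ (∀ h, B h ∉ S) ∧
    r ≤ prob p n fun h => H ⊑ fromEdgeSet (G ∪ {e | e ∈ successes B h})

namespace Winnable

variable {V : Type*} {p : ℝ} {H : SimpleGraph V} {n : ℕ} {S : Finset (Sym2 ℕ)} {G : Set (Sym2 ℕ)}
  {r : ℝ}

theorem exists_queryProb_ge (h : Winnable p H n ∅ ∅ r) :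
    ∃ Q, ValidBuilder Q ∧ r ≤ queryProb H Q n p := by
  obtain ⟨Q, hQ, -, hr⟩ := h
  refine ⟨Q, hQ, ?_⟩
  simpa only [queryProb_eq_prob, Set.empty_union] using hr

theorem of_isContained (hG : H ⊑ fromEdgeSet G) (hr : r ≤ 1) :
    Winnable p H n S G r := by
  obtain ⟨B, hB, hBS⟩ := exists_validBuilder_notMem S
  refine ⟨B, hB, hBS, hr.trans ?_⟩
  have hall : ∀ h, H ⊑ fromEdgeSet (G ∪ {e | e ∈ successes B h}) := fun h =>
    hG.trans_le (fromEdgeSet_mono Set.subset_union_left)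
  simp only [hall, prob_const, if_true, le_refl]

theorem of_nonpos (hp : p ∈ unitInterval) (hr : r ≤ 0) : Winnable p H n S G r := by
  obtain ⟨B, hB, hBS⟩ := exists_validBuilder_notMem S
  exact ⟨B, hB, hBS, hr.trans (prob_mem_unitInterval hp n _).1⟩

theorem mono (hp : p ∈ unitInterval) (h : Winnable p H n S G r) {n' : ℕ} {S' : Finset (Sym2 ℕ)}
    {G' : Set (Sym2 ℕ)} {r' : ℝ} (hn : n ≤ n') (hS : S' ⊆ S) (hG : G ⊆ G') (hr : r' ≤ r) :
    Winnable p H n' S' G' r' := by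
  obtain ⟨B, hB, hBS, hwin⟩ := h
  refine ⟨B, hB, fun l hl => hBS l (hS hl), (hr.trans hwin).trans ?_⟩
  calc prob p n (fun l => H ⊑ fromEdgeSet (G ∪ {e | e ∈ successes B l}))
      ≤ prob p n (fun l => H ⊑ fromEdgeSet (G' ∪ {e | e ∈ successes B l})) :=
        prob_mono hp n fun l hl =>
          hl.trans_le (fromEdgeSet_mono (Set.union_subset_union_left _ hG))
    _ ≤ _ := prob_mono_length hp (fun l b hl => hl.trans_le (fromEdgeSet_mono
        (Set.union_subset_union_right _ fun e he => by
          rw [Set.mem_ofPred_eq, successes_append]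
          exact List.mem_append_left _ he))) hn

theorem query (hp : p ∈ unitInterval) {e : Sym2 ℕ} (he : ¬ e.IsDiag) (heS : e ∉ S) {r₁ r₀ : ℝ}
    (h₁ : Winnable p H n (insert e S) (insert e G) r₁) (h₀ : Winnable p H n (insert e S) G r₀) :
    Winnable p H (n + 1) S G (p * r₁ + (1 - p) * r₀) := by
  obtain ⟨B₁, hB₁, hS₁, hr₁⟩ := h₁
  obtain ⟨B₀, hB₀, hS₀, hr₀⟩ := h₀
  simp only [Finset.mem_insert, not_or] at hS₁ hS₀
  refine ⟨branch e B₁ B₀, hB₁.branch he hB₀ (fun h => (hS₁ h).1) (fun h => (hS₀ h).1), ?_, ?_⟩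
  · rintro (_ | ⟨_ | _, h⟩)
    exacts [heS, (hS₀ h).2, (hS₁ h).2]
  · have hsucc (h : List Bool) : G ∪ {f | f ∈ successes (branch e B₁ B₀) (true :: h)} =
        insert e G ∪ {f | f ∈ successes B₁ h} := by
      ext f
      simp only [successes, branch, List.mem_cons, Set.mem_union, Set.mem_ofPred_eq,
        Set.mem_insert_iff]
      tauto
    rw [prob]
    simp only [hsucc]
    gcongr
    exacts [hp.1, sub_nonneg.2 hp.2, hr₀]

theorem collect (hp : p ∈ unitInterval) {k : ℕ} {r₁ r₀ : ℝ} {A : Finset (Sym2 ℕ)}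
    (hA : ∀ e ∈ A, ¬ e.IsDiag) (hAS : Disjoint A S)
    (hsucc : ∀ W ⊆ A, W.card = k → Winnable p H n (S ∪ A) (G ∪ W) r₁)
    (hfail : Winnable p H n (S ∪ A) G r₀) :
    Winnable p H (n + A.card) S G (r₀ + (r₁ - r₀) * binomTail p A.card k) := by
  induction A using Finset.induction_on generalizing S G k with
  | empty =>
    cases k with
    | zero => simpa [binomTail_zero_right] using hsucc ∅ subset_rfl rfl
    | succ k => simpa [binomTail_zero_succ] using hfail
  | insert e A he ih =>
    rw [Finset.forall_mem_insert] at hA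
    rw [Finset.disjoint_insert_left] at hAS
    cases k with
    | zero =>
      have h := hsucc ∅ (Finset.empty_subset _) rfl
      exact h.mono hp (by simp) Finset.subset_union_left (by simp)
        (by rw [binomTail_zero_right]; linarith)
    | succ k =>
      rw [← Finset.insert_union_comm] at hsucc hfail
      have hAS' : Disjoint A (insert e S) := Finset.disjoint_insert_right.2 ⟨he, hAS.2⟩
      have h₁ := ih (G := insert e G) (k := k) hA.2 hAS' (fun W hW hWk => by
          have hcard : (insert e W).card = k + 1 := by
            rw [Finset.card_insert_of_notMem (fun h => he (hW h)), hWk]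
          simpa [Set.insert_union, Set.union_insert] using
            hsucc (insert e W) (Finset.insert_subset_insert e hW) hcard)
        (hfail.mono hp le_rfl subset_rfl (Set.subset_insert e G) le_rfl)
      have h₀ := ih (k := k + 1) hA.2 hAS'
        (fun W hW => hsucc W (hW.trans (Finset.subset_insert e A))) hfail
      rw [Finset.card_insert_of_notMem he, binomTail_succ_succ]
      exact (query hp hA.1 hAS.1 h₁ h₀).mono hp le_rfl subset_rfl subset_rfl (le_of_eq (by ring))

end Winnable

/-- The pairs joining the vertex `v` to the elements of `A`. -/
def spokes (v : ℕ) (A : Finset ℕ) : Finset (Sym2 ℕ) := A.image fun a => s(v, a)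

theorem card_spokes (v : ℕ) (A : Finset ℕ) : (spokes v A).card = A.card :=
  Finset.card_image_of_injective A fun _ _ h => Sym2.congr_right.1 h

theorem spokes_subset_spokes {v : ℕ} {A B : Finset ℕ} (h : A ⊆ B) : spokes v A ⊆ spokes v B :=
  Finset.image_subset_image h

theorem mk_mem_spokes_iff {v a b : ℕ} {A : Finset ℕ} :
    s(a, b) ∈ spokes v A ↔ (a = v ∧ b ∈ A) ∨ (b = v ∧ a ∈ A) := by
  simp only [spokes, Finset.mem_image, Sym2.eq_iff]
  aesop

theorem spokes_subset_sym2 {v : ℕ} {A B : Finset ℕ} (hv : v ∈ B) (hA : A ⊆ B) :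
    spokes v A ⊆ B.sym2 :=
  Finset.image_subset_iff.2 fun _ ha => Finset.mk_mem_sym2_iff.2 ⟨hv, hA ha⟩

theorem isContained_of_insert_sym2 {V : Type*} {H : SimpleGraph V} {G : Set (Sym2 ℕ)} {v : ℕ}
    {T W : Finset ℕ} (hTW : T ⊆ W) (h : H ⊑ fromEdgeSet (G ∪ (insert v T).sym2)) :
    H ⊑ fromEdgeSet (G ∪ spokes v W ∪ T.sym2) := by
  refine h.trans_le fun a b hab => ?_
  simp only [fromEdgeSet_adj, Set.mem_union, Finset.mem_coe, Finset.mk_mem_sym2_iff,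
    Finset.mem_insert, mk_mem_spokes_iff] at hab ⊢
  grind

/-- None of the pairs of distinct vertices of `D` belongs to `S`. -/
def Fresh (S : Finset (Sym2 ℕ)) (D : Finset ℕ) : Prop :=
  (D : Set ℕ).Pairwise fun x y => s(x, y) ∉ S

theorem Fresh.mono {S : Finset (Sym2 ℕ)} {D D' : Finset ℕ} (h : Fresh S D) (hD : D' ⊆ D) :
    Fresh S D' :=
  Set.Pairwise.mono (Finset.coe_subset.2 hD) h

theorem Fresh.union {S T : Finset (Sym2 ℕ)} {D : Finset ℕ} (hS : Fresh S D)
    (hT : Fresh T D) : Fresh (S ∪ T) D :=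
  fun _ ha _ hb hab h => (Finset.mem_union.1 h).elim (hS ha hb hab) (hT ha hb hab)

theorem Fresh.mk_notMem {S : Finset (Sym2 ℕ)} {v : ℕ} {A : Finset ℕ} (h : Fresh S (insert v A))
    (hv : v ∉ A) : ∀ a ∈ A, s(v, a) ∉ S := fun _ ha =>
  h (Finset.mem_insert_self v A) (Finset.mem_insert_of_mem ha) fun hva => hv (hva ▸ ha)

theorem fresh_spokes {v : ℕ} {A D : Finset ℕ} (hv : v ∉ D) : Fresh (spokes v A) D := by
  intro a ha b hb _ h
  rcases mk_mem_spokes_iff.1 h with ⟨rfl, -⟩ | ⟨rfl, -⟩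
  exacts [hv ha, hv hb]

theorem fresh_sym2 {W D : Finset ℕ} (h : Disjoint D W) : Fresh W.sym2 D := fun _ ha _ _ _ hab =>
  Finset.disjoint_left.1 h ha (Finset.mk_mem_sym2_iff.1 hab).1

section TrialProbability

variable {p : ℝ}

/-- A lower bound for the probability that Builder completes a triangle at a given vertex with
`2 * w + 1` queries. -/
noncomputable def triangleProb (p : ℝ) (w : ℕ) : ℝ := p * binomTail p w 1 ^ 2

theorem triangleProb_mem_unitInterval (hp : p ∈ unitInterval) (w : ℕ) :
    triangleProb p w ∈ unitInterval := by
  have htail := binomTail_mem_unitInterval hp w 1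
  rw [triangleProb, sq]
  exact unitInterval.mul_mem hp (unitInterval.mul_mem htail htail)

/-- A lower bound for the probability that Builder completes a `K₄` at a given vertex by querying
`n` pairs at it and then searching for a triangle among `4 * w` of its neighbours. -/
noncomputable def fourCliqueProb (p : ℝ) (n w : ℕ) : ℝ :=
  binomTail p n (4 * w) * binomTail (triangleProb p w) w 1

theorem fourCliqueProb_mem_unitInterval (hp : p ∈ unitInterval) (n w : ℕ) :
    fourCliqueProb p n w ∈ unitInterval :=
  unitInterval.mul_mem (binomTail_mem_unitInterval hp _ _)
    (binomTail_mem_unitInterval (triangleProb_mem_unitInterval hp w) _ _)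

end TrialProbability

namespace Winnable

variable {V : Type*} {p : ℝ} {H : SimpleGraph V} {n : ℕ} {S : Finset (Sym2 ℕ)} {G : Set (Sym2 ℕ)}
  {r : ℝ}

theorem collect_spokes (hp : p ∈ unitInterval) {k v : ℕ} {r₁ r₀ : ℝ} {A : Finset ℕ} (hv : v ∉ A)
    (hS : ∀ a ∈ A, s(v, a) ∉ S)
    (hsucc : ∀ W ⊆ A, W.card = k → Winnable p H n (S ∪ spokes v A) (G ∪ spokes v W) r₁)
    (hfail : Winnable p H n (S ∪ spokes v A) G r₀) :
    Winnable p H (n + A.card) S G (r₀ + (r₁ - r₀) * binomTail p A.card k) := by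
  rw [← card_spokes v A]
  refine collect hp ?_ ?_ (fun W hW hWk => ?_) hfail
  · exact Finset.forall_mem_image.2 fun a ha hva => hv (Sym2.mk_isDiag_iff.1 hva ▸ ha)
  · exact Finset.disjoint_left.2 (Finset.forall_mem_image.2 hS)
  · obtain ⟨W, hWA, rfl⟩ := Finset.subset_image_iff.1 hW
    exact hsucc W (Finset.coe_subset.1 hWA) ((card_spokes v W).symm.trans hWk)

theorem find_spoke (hp : p ∈ unitInterval) {w v : ℕ} {r₁ r₀ : ℝ} {A : Finset ℕ} (hA : A.card = w)
    (hv : v ∉ A) (hS : ∀ a ∈ A, s(v, a) ∉ S)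
    (hsucc : ∀ b ∈ A, Winnable p H n (S ∪ spokes v A) (insert s(v, b) G) r₁)
    (hfail : Winnable p H n (S ∪ spokes v A) G r₀) :
    Winnable p H (n + w) S G (r₀ + (r₁ - r₀) * binomTail p w 1) := by
  rw [← hA]
  refine collect_spokes hp hv hS (fun W hW hW1 => ?_) hfail
  obtain ⟨b, rfl⟩ := Finset.card_eq_one.1 hW1
  simpa [spokes] using hsucc b (Finset.singleton_subset_iff.1 hW)

theorem close_triangle (hp : p ∈ unitInterval) {a b c : ℕ} (hbc : b ≠ c) (hS : s(b, c) ∉ S)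
    (htri : H ⊑ fromEdgeSet (G ∪ ({a, b, c} : Finset ℕ).sym2))
    (hfail : Winnable p H n (insert s(b, c) S) G r) :
    Winnable p H (n + 1) S (insert s(a, c) (insert s(a, b) G)) (p * 1 + (1 - p) * r) := by
  refine query hp (by simpa using hbc) hS (of_isContained (htri.trans_le ?_) le_rfl)
    (hfail.mono hp le_rfl subset_rfl (fun e he => by simp [he]) le_rfl)
  intro x y
  simp only [fromEdgeSet_adj, Set.mem_union, Set.mem_insert_iff, Finset.mem_coe,
    Finset.mk_mem_sym2_iff, Finset.mem_insert, Finset.mem_singleton, Sym2.eq_iff]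
  grind

/- Find a neighbour `b` of `a` among `w` candidates, then a neighbour `c` among `w` others, and
query the pair `bc`. -/
theorem triangle_trial (hp : p ∈ unitInterval) {w a : ℕ} {B : Finset ℕ} (ha : a ∉ B)
    (hw : 2 * w ≤ B.card) (hS : Fresh S (insert a B))
    (htri : ∀ T ⊆ insert a B, T.card = 3 → H ⊑ fromEdgeSet (G ∪ T.sym2))
    (hfail : Winnable p H n (S ∪ spokes a B) G r)
    (hclose : ∀ b ∈ B, ∀ c ∈ B, Winnable p H n (insert s(b, c) (S ∪ spokes a B)) G r) :
    Winnable p H (n + (2 * w + 1)) S G (1 - (1 - triangleProb p w) * (1 - r)) := by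
  obtain ⟨B₁, hB₁, hcard₁⟩ := Finset.exists_subset_card_eq (show w ≤ B.card by omega)
  obtain ⟨B₂, hB₂, hcard₂⟩ := Finset.exists_subset_card_eq
    (show w ≤ (B \ B₁).card by rw [Finset.card_sdiff_of_subset hB₁]; omega)
  obtain ⟨hB₂, hdisj⟩ := Finset.subset_sdiff.1 hB₂
  have ha₁ : a ∉ B₁ := fun h => ha (hB₁ h)
  have ha₂ : a ∉ B₂ := fun h => ha (hB₂ h)
  have hspokes : S ∪ spokes a B₁ ∪ spokes a B₂ ⊆ S ∪ spokes a B := by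
    rw [Finset.union_assoc]
    gcongr
    exact Finset.union_subset (spokes_subset_spokes hB₁) (spokes_subset_spokes hB₂)
  have third (b c : ℕ) (hb : b ∈ B₁) (hc : c ∈ B₂) :
      Winnable p H (n + 1) (S ∪ spokes a B₁ ∪ spokes a B₂)
        (insert s(a, c) (insert s(a, b) G)) (p * 1 + (1 - p) * r) := by
    have hbc : b ≠ c := fun h => Finset.disjoint_left.1 hdisj hc (h ▸ hb)
    have hnew : Fresh (S ∪ spokes a B₁ ∪ spokes a B₂) B :=
      ((hS.mono (Finset.subset_insert a B)).union (fresh_spokes ha)).union (fresh_spokes ha)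
    have hT : ({a, b, c} : Finset ℕ).card = 3 := Finset.card_eq_three.2
      ⟨a, b, c, fun h => ha₁ (h ▸ hb), fun h => ha₂ (h ▸ hc), hbc, rfl⟩
    refine close_triangle hp hbc (hnew (hB₁ hb) (hB₂ hc) hbc) (htri _ ?_ hT)
      ((hclose b (hB₁ hb) c (hB₂ hc)).mono hp le_rfl (by gcongr) subset_rfl le_rfl)
    simp [Finset.insert_subset_iff, hB₁ hb, hB₂ hc]
  have second (b : ℕ) (hb : b ∈ B₁) : Winnable p H (n + 1 + w) (S ∪ spokes a B₁)
      (insert s(a, b) G) (r + (p * 1 + (1 - p) * r - r) * binomTail p w 1) := by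
    have hnew : ∀ c ∈ B₂, s(a, c) ∉ S ∪ spokes a B₁ := fun c hc => by
      simp [mk_mem_spokes_iff, hS.mk_notMem ha c (hB₂ hc), Finset.disjoint_left.1 hdisj hc, ha₁]
    exact find_spoke hp hcard₂ ha₂ hnew (third b · hb)
      (hfail.mono hp n.le_succ hspokes (Set.subset_insert _ _) le_rfl)
  refine (find_spoke hp hcard₁ ha₁ (fun b hb => hS.mk_notMem ha b (hB₁ hb)) second
    (hfail.mono hp (by omega : n ≤ n + 1 + w)
      (Finset.subset_union_left.trans hspokes) subset_rfl le_rfl)).mono hp (by omega) subset_rfl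
      subset_rfl (le_of_eq (by rw [triangleProb]; ring))

theorem triangle_search (hp : p ∈ unitInterval) (w k : ℕ) {W : Finset ℕ}
    (hw : 2 * w + 2 * k ≤ W.card) (hS : Fresh S W)
    (htri : ∀ T ⊆ W, T.card = 3 → H ⊑ fromEdgeSet (G ∪ T.sym2))
    (hfail : Winnable p H n (S ∪ W.sym2) G r) :
    Winnable p H (n + k * (2 * w + 1)) S G
      (1 - (1 - triangleProb p w) ^ k * (1 - r)) := by
  induction k generalizing S W with
  | zero => exact hfail.mono hp (by omega) Finset.subset_union_left subset_rfl (by simp)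
  | succ k ih =>
    obtain ⟨a, ha⟩ : W.Nonempty := Finset.card_pos.1 (by omega)
    have next {T : Finset (Sym2 ℕ)} {W' : Finset ℕ} (hT : T ⊆ W.sym2) (hW' : W' ⊆ W)
        (hcard : 2 * w + 2 * k ≤ W'.card) (hfresh : Fresh T W') :
        Winnable p H (n + k * (2 * w + 1)) (S ∪ T) G
          (1 - (1 - triangleProb p w) ^ k * (1 - r)) := by
      refine ih hcard ((hS.mono hW').union hfresh) (fun T hT => htri T (hT.trans hW'))
        (hfail.mono hp le_rfl ?_ subset_rfl le_rfl)
      rw [Finset.union_assoc]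
      gcongr
      exact Finset.union_subset hT (Finset.sym2_mono hW')
    have hcard : (W.erase a).card = W.card - 1 := Finset.card_erase_of_mem ha
    have haW : a ∉ W.erase a := Finset.notMem_erase a W
    have hspokes : spokes a (W.erase a) ⊆ W.sym2 := spokes_subset_sym2 ha (W.erase_subset a)
    have close : ∀ b ∈ W.erase a, ∀ c ∈ W.erase a, Winnable p H (n + k * (2 * w + 1))
        (insert s(b, c) (S ∪ spokes a (W.erase a))) G
        (1 - (1 - triangleProb p w) ^ k * (1 - r)) := fun b hb c hc => by
      rw [← Finset.union_insert]
      refine next (W' := (W.erase a).erase b) ?_ ?_ ?_ ?_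
      · exact Finset.insert_subset (Finset.mk_mem_sym2_iff.2
          ⟨Finset.mem_of_mem_erase hb, Finset.mem_of_mem_erase hc⟩) hspokes
      · exact (Finset.erase_subset b _).trans (W.erase_subset a)
      · rw [Finset.card_erase_of_mem hb]; omega
      · intro x hx y hy _
        simp only [Finset.mem_coe, Finset.mem_erase, Finset.mem_insert, Sym2.eq_iff,
          mk_mem_spokes_iff] at hx hy ⊢
        grind
    rw [← Finset.insert_erase ha] at hS htri
    refine (triangle_trial hp (w := w) haW (by omega) hS htri
      (next hspokes (W.erase_subset a) (by omega) (fresh_spokes haW)) close).mono hp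
      (le_of_eq (by ring)) subset_rfl subset_rfl (le_of_eq (by ring))

theorem fourClique_trial (hp : p ∈ unitInterval) (w : ℕ) {u : ℕ} {A : Finset ℕ} (hu : u ∉ A)
    (hS : Fresh S (insert u A))
    (hclique : ∀ T ⊆ insert u A, T.card = 4 → H ⊑ fromEdgeSet (G ∪ T.sym2))
    (hfail : ∀ W ⊆ A, W.card ≤ 4 * w → Winnable p H n (S ∪ spokes u A ∪ W.sym2) G r) :
    Winnable p H (n + w * (2 * w + 1) + A.card) S G
      (1 - (1 - fourCliqueProb p A.card w) * (1 - r)) := by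
  have search (W : Finset ℕ) (hWA : W ⊆ A) (hW : W.card = 4 * w) :
      Winnable p H (n + w * (2 * w + 1)) (S ∪ spokes u A) (G ∪ spokes u W)
        (1 - (1 - triangleProb p w) ^ w * (1 - r)) := by
    have hnew : Fresh (S ∪ spokes u A) W :=
      ((hS.mono (Finset.subset_insert u A)).union (fresh_spokes hu)).mono hWA
    refine triangle_search hp w w (by omega) hnew (fun T hT hT3 => ?_)
      ((hfail W hWA hW.le).mono hp le_rfl subset_rfl Set.subset_union_left le_rfl)
    have huT : u ∉ T := fun h => hu (hWA (hT h))
    exact isContained_of_insert_sym2 hT (hclique (insert u T)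
      (Finset.insert_subset_insert u (hT.trans hWA))
      (by rw [Finset.card_insert_of_notMem huT, hT3]))
  have hfail₀ : Winnable p H (n + w * (2 * w + 1)) (S ∪ spokes u A) G r :=
    (hfail ∅ (Finset.empty_subset A) (by simp)).mono hp (by omega) (by simp) subset_rfl le_rfl
  refine (collect_spokes hp hu (hS.mk_notMem hu) search hfail₀).mono hp le_rfl subset_rfl
    subset_rfl (le_of_eq ?_)
  rw [fourCliqueProb, binomTail_one (triangleProb p w)]
  ring

theorem fourClique_search (hp : p ∈ unitInterval) (w n₁ k : ℕ) {D : Finset ℕ}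
    (hD : n₁ + k * (4 * w + 1) ≤ D.card) (hS : Fresh S D)
    (hclique : ∀ T ⊆ D, T.card = 4 → H ⊑ fromEdgeSet (G ∪ T.sym2)) :
    Winnable p H (k * (w * (2 * w + 1) + n₁)) S G
      (binomTail (fourCliqueProb p n₁ w) k 1) := by
  rw [binomTail_one]
  induction k generalizing S D with
  | zero => exact of_nonpos hp (by simp)
  | succ k ih =>
    rw [Nat.succ_mul] at hD
    obtain ⟨u, hu⟩ : D.Nonempty := Finset.card_pos.1 (by omega)
    obtain ⟨A, hA, hAcard⟩ := Finset.exists_subset_card_eq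
      (show n₁ ≤ (D.erase u).card by rw [Finset.card_erase_of_mem hu]; omega)
    have huA : u ∉ A := fun h => Finset.notMem_erase u D (hA h)
    have hAD : insert u A ⊆ D := Finset.insert_subset hu (hA.trans (D.erase_subset u))
    have trial := fourClique_trial hp w huA (hS.mono hAD)
      (fun T hT => hclique T (hT.trans hAD)) fun W _ hW => ih (D := D \ insert u W) ?_ ?_
        fun T hT => hclique T (hT.trans Finset.sdiff_subset)
    · rw [hAcard] at trial
      exact trial.mono hp (le_of_eq (by ring)) subset_rfl subset_rfl (le_of_eq (by ring))
    · have := Finset.le_card_sdiff (insert u W) D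
      have := Finset.card_insert_le u W
      omega
    · have hu' : u ∉ D \ insert u W := by simp
      exact ((hS.mono Finset.sdiff_subset).union (fresh_spokes hu')).union
        (fresh_sym2 (Finset.sdiff_disjoint.mono_right (Finset.subset_insert u W)))

end Winnable

section Upper

theorem K_isContained_union_sym2 (G : Set (Sym2 ℕ)) {m : ℕ} {T : Finset ℕ}
    (hT : T.card = m) : K m ⊑ fromEdgeSet (G ∪ T.sym2) := by
  refine isContained_fromEdgeSet_iff.2
    ⟨T.orderEmbOfFin hT, (T.orderEmbOfFin hT).injective, fun u v _ => Or.inr ?_⟩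
  exact Finset.mem_coe.2 <| Finset.mk_mem_sym2_iff.2
    ⟨T.orderEmbOfFin_mem hT u, T.orderEmbOfFin_mem hT v⟩

variable {p : ℝ}

theorem winnable_of_spokes {V : Type*} {H : SimpleGraph V} (hp : p ∈ unitInterval)
    {k m : ℕ} {r : ℝ} (n : ℕ) (h : ∀ W : Finset ℕ, W.card = k → 0 ∉ W →
      Winnable p H m (spokes 0 (Finset.Ioc 0 n)) (spokes 0 W) r) :
    Winnable p H (m + n) ∅ ∅ (r * binomTail p n k) := by
  have h0 : 0 ∉ Finset.Ioc 0 n := by simp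
  have := Winnable.collect_spokes hp (n := m) (k := k) (S := ∅) (G := ∅) (r₁ := r) h0 (by simp)
    (fun W hWA hW => by simpa using h W hW fun h => h0 (hWA h)) (Winnable.of_nonpos hp le_rfl)
  simpa using this

theorem K_three_isContained_insert_spokes {W : Finset ℕ} {v b c : ℕ} (hv : v ∉ W) (hb : b ∈ W)
    (hc : c ∈ W) (hbc : b ≠ c) : K 3 ⊑ fromEdgeSet (insert s(b, c) (spokes v W)) := by
  have hbcW : {b, c} ⊆ W := Finset.insert_subset hb (Finset.singleton_subset_iff.2 hc)
  have hcard : (insert v {b, c} : Finset ℕ).card = 3 := by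
    rw [Finset.card_insert_of_notMem fun h => hv (hbcW h), Finset.card_pair hbc]
  refine (isContained_of_insert_sym2 hbcW (K_isContained_union_sym2 ∅ hcard)).trans_le
    fun x y hxy => ?_
  simp only [fromEdgeSet_adj, Set.empty_union, Set.mem_union, Set.mem_insert_iff, Finset.mem_coe,
    Finset.mk_mem_sym2_iff, Finset.mem_insert, Finset.mem_singleton, Sym2.eq_iff] at hxy ⊢
  grind

theorem winnable_K_three (hp : p ∈ unitInterval) (k n : ℕ) :
    Winnable p (K 3) (k.choose 2 + n) ∅ ∅ (binomTail p (k.choose 2) 1 * binomTail p n k) := by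
  refine winnable_of_spokes hp n fun W hW h0W => ?_
  rw [← hW, ← Sym2.card_image_offDiag]
  have hdiag : ∀ e ∈ W.offDiag.image Sym2.mk.uncurry, ¬ e.IsDiag :=
    Finset.forall_mem_image.2 fun ⟨b, c⟩ hbc => (Finset.mem_offDiag.1 hbc).2.2
  have hdisj : Disjoint (W.offDiag.image Sym2.mk.uncurry) (spokes 0 (Finset.Ioc 0 n)) :=
    Finset.disjoint_left.2 <| Finset.forall_mem_image.2 fun ⟨b, c⟩ hbc =>
      have ⟨hb, hc, hne⟩ := Finset.mem_offDiag.1 hbc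
      fresh_spokes h0W hb hc hne
  have := Winnable.collect (k := 1) (r₁ := 1) (r₀ := 0) (n := 0) (H := K 3) (G := spokes 0 W)
    hp hdiag hdisj (fun P hP hP1 => ?_) (Winnable.of_nonpos hp le_rfl)
  · simpa using this
  · obtain ⟨e, rfl⟩ := Finset.card_eq_one.1 hP1
    obtain ⟨⟨b, c⟩, hbc, rfl⟩ := Finset.mem_image.1 (Finset.singleton_subset_iff.1 hP)
    obtain ⟨hb, hc, hne⟩ := Finset.mem_offDiag.1 hbc
    refine Winnable.of_isContained ?_ le_rfl
    simpa using K_three_isContained_insert_spokes h0W hb hc hne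

theorem winnable_K_four (hp : p ∈ unitInterval) (w n : ℕ) :
    Winnable p (K 4) (w * (2 * w + 1) + n) ∅ ∅ (fourCliqueProb p n w) := by
  have h0 : 0 ∉ Finset.Ioc 0 n := by simp
  have hnew : Fresh ∅ (insert 0 (Finset.Ioc 0 n)) := fun _ _ _ _ _ => Finset.notMem_empty _
  have := Winnable.fourClique_trial (H := K 4) (G := ∅) (r := 0) (n := 0) hp w h0 hnew
    (fun T _ hT => K_isContained_union_sym2 ∅ hT)
    fun _ _ _ => Winnable.of_nonpos hp le_rfl
  simpa using this

theorem winnable_K_five (hp : p ∈ unitInterval) (w n₁ k n : ℕ) :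
    Winnable p (K 5) (k * (w * (2 * w + 1) + n₁) + n) ∅ ∅
      (binomTail (fourCliqueProb p n₁ w) k 1 * binomTail p n (n₁ + k * (4 * w + 1))) := by
  refine winnable_of_spokes hp n fun W hW h0W => ?_
  refine Winnable.fourClique_search hp w n₁ k hW.ge (fresh_spokes h0W) fun T hTW hT => ?_
  have h0T : 0 ∉ T := fun h => h0W (hTW h)
  have hK := isContained_of_insert_sym2 hTW
    (K_isContained_union_sym2 ∅ (by rw [Finset.card_insert_of_notMem h0T, hT] : _ = 5))
  rwa [Set.empty_union] at hK

theorem winnable_K_three_half (hp : p ∈ unitInterval) {X : ℕ} (hX : 1 ≤ p * (X : ℝ) ^ 2) :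
    Winnable p (K 3) (22 * X ^ 3) ∅ ∅ (1 / 2) := by
  have hX1 : 1 ≤ X := Nat.one_le_iff_ne_zero.2 (by rintro rfl; norm_num at hX)
  have hX1' : (1 : ℝ) ≤ X := mod_cast hX1
  have hchoose : (((4 * X).choose 2 : ℕ) : ℝ) = 8 * X ^ 2 - 2 * X := by
    rw [Nat.cast_choose_two]; push_cast; ring
  have hspokes : 7 / 8 ≤ binomTail p (14 * X ^ 3) (4 * X) :=
    seven_eighths_le_binomTail hp (by push_cast; nlinarith)
  have hclose : (6 : ℝ) / (1 + 6) ≤ binomTail p ((4 * X).choose 2) 1 := by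
    refine div_one_add_le_binomTail_one hp (by norm_num) ?_
    rw [hchoose]
    nlinarith [mul_nonneg hp.1 (mul_nonneg (by positivity : (0 : ℝ) ≤ X) (sub_nonneg.2 hX1'))]
  refine (winnable_K_three hp (4 * X) (14 * X ^ 3)).mono hp ?_ subset_rfl subset_rfl ?_
  · have : (((4 * X).choose 2 : ℕ) : ℝ) ≤ 8 * X ^ 3 := by rw [hchoose]; nlinarith
    have : (4 * X).choose 2 ≤ 8 * X ^ 3 := mod_cast this
    omega
  · calc (1 : ℝ) / 2 ≤ 6 / (1 + 6) * (7 / 8) := by norm_num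
      _ ≤ _ := by gcongr

theorem winnable_K_four_half (hp : p ∈ unitInterval) {X : ℕ} (hX : 1 ≤ p * (X : ℝ)) :
    Winnable p (K 4) (74 * X ^ 2) ∅ ∅ (1 / 2) := by
  have hX1 : 1 ≤ X := Nat.one_le_iff_ne_zero.2 (by rintro rfl; norm_num at hX)
  have hX1' : (1 : ℝ) ≤ X := mod_cast hX1
  have hspokes : 7 / 8 ≤ binomTail p (38 * X ^ 2) (4 * (4 * X)) :=
    seven_eighths_le_binomTail hp (by push_cast; nlinarith)
  have hleg : (4 : ℝ) / (1 + 4) ≤ binomTail p (4 * X) 1 :=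
    div_one_add_le_binomTail_one hp (by norm_num) (by push_cast; linarith)
  have htriangle : (2 : ℝ) / (1 + 2) ≤ binomTail (triangleProb p (4 * X)) (4 * X) 1 := by
    refine div_one_add_le_binomTail_one (triangleProb_mem_unitInterval hp _) (by norm_num) ?_
    have := pow_le_pow_left₀ (by norm_num) hleg 2
    rw [triangleProb]
    push_cast
    nlinarith
  refine (winnable_K_four hp (4 * X) (38 * X ^ 2)).mono hp (by nlinarith) subset_rfl subset_rfl ?_
  calc (1 : ℝ) / 2 ≤ 7 / 8 * (2 / (1 + 2)) := by norm_num
    _ ≤ fourCliqueProb p (38 * X ^ 2) (4 * X) := by unfold fourCliqueProb; gcongr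

theorem one_div_le_binomTail_triangleProb (hp : p ∈ unitInterval) {X : ℕ}
    (hX : 1 ≤ p * (X : ℝ) ^ 3) :
    1 / (5 * X ^ 3) ≤ binomTail (triangleProb p (X ^ 2)) (X ^ 2) 1 := by
  have hX1 : 1 ≤ X := Nat.one_le_iff_ne_zero.2 (by rintro rfl; norm_num at hX)
  have hX1' : (1 : ℝ) ≤ X := mod_cast hX1
  have hleg : 1 / (2 * X) ≤ binomTail p (X ^ 2) 1 := by
    refine le_trans ?_ (div_one_add_le_binomTail_one hp (z := 1 / X) (by positivity) ?_)
    · rw [div_le_div_iff₀ (by positivity) (by positivity)]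
      field_simp
      linarith
    · rw [div_le_iff₀ (by positivity)]
      push_cast
      linarith
  refine le_trans ?_ (div_one_add_le_binomTail_one (triangleProb_mem_unitInterval hp _)
    (z := 1 / (4 * X ^ 3)) (by positivity) ?_)
  · rw [div_le_div_iff₀ (by positivity) (by positivity)]
    field_simp
    nlinarith [one_le_pow₀ hX1' (n := 3)]
  · calc (1 : ℝ) / (4 * X ^ 3) ≤ p * X ^ 3 / (4 * X ^ 3) := by gcongr
      _ = (X ^ 2 : ℕ) * (p * (1 / (2 * X)) ^ 2) := by
        push_cast
        field_simp
        norm_num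
      _ ≤ _ := by unfold triangleProb; gcongr; exact hp.1

theorem winnable_K_five_half (hp : p ∈ unitInterval) {X : ℕ} (hX : 1 ≤ p * (X : ℝ) ^ 3) :
    Winnable p (K 5) (1114 * X ^ 8) ∅ ∅ (1 / 2) := by
  have hX1 : 1 ≤ X := Nat.one_le_iff_ne_zero.2 (by rintro rfl; norm_num at hX)
  have hX1' : (1 : ℝ) ≤ X := mod_cast hX1
  have hX0 : (0 : ℝ) ≤ X := by positivity
  have hneighbours : 7 / 8 ≤ binomTail p (14 * X ^ 5) (4 * X ^ 2) :=
    seven_eighths_le_binomTail hp (by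
      have := mul_le_mul_of_nonneg_right hX (sq_nonneg (X : ℝ))
      push_cast
      nlinarith)
  have hsearch : (7 : ℝ) / (1 + 7) ≤
      binomTail (fourCliqueProb p (14 * X ^ 5) (X ^ 2)) (40 * X ^ 3) 1 := by
    refine div_one_add_le_binomTail_one (fourCliqueProb_mem_unitInterval hp _ _) (by norm_num) ?_
    calc (7 : ℝ) = (40 * X ^ 3 : ℕ) * (7 / 8 * (1 / (5 * X ^ 3))) := by
          push_cast
          field_simp
          norm_num
      _ ≤ _ := by unfold fourCliqueProb; gcongr; exact one_div_le_binomTail_triangleProb hp hX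
  have hspokes : 7 / 8 ≤ binomTail p (434 * X ^ 8) (14 * X ^ 5 + 40 * X ^ 3 * (4 * X ^ 2 + 1)) :=
    seven_eighths_le_binomTail hp (by
      have := mul_le_mul_of_nonneg_right hX (pow_nonneg hX0 5)
      have := pow_le_pow_right₀ hX1' (by norm_num : 3 ≤ 5)
      have := one_le_pow₀ hX1' (n := 5)
      push_cast
      nlinarith)
  refine (winnable_K_five hp (X ^ 2) (14 * X ^ 5) (40 * X ^ 3) (434 * X ^ 8)).mono hp ?_
    subset_rfl subset_rfl ?_
  · have := Nat.pow_le_pow_right hX1 (by norm_num : 5 ≤ 8)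
    have := Nat.pow_le_pow_right hX1 (by norm_num : 7 ≤ 8)
    nlinarith
  · calc (1 : ℝ) / 2 ≤ 7 / (1 + 7) * (7 / 8) := by norm_num
      _ ≤ _ := by gcongr

end Upper

section FQuery

open Asymptotics Filter

variable {V : Type*} {H : SimpleGraph V} {p : ℝ}

theorem Winnable.fQuery_le {n : ℕ} (h : Winnable p H n ∅ ∅ (1 / 2)) : fQuery H p ≤ n :=
  Nat.sInf_le h.exists_queryProb_ge

theorem Winnable.exists_queryProb_fQuery_ge {n : ℕ} (h : Winnable p H n ∅ ∅ (1 / 2)) :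
    ∃ Q, ValidBuilder Q ∧ 1 / 2 ≤ queryProb H Q (fQuery H p) p :=
  Nat.sInf_mem (s := {N | ∃ Q, ValidBuilder Q ∧ (1 : ℝ) / 2 ≤ queryProb H Q N p})
    ⟨n, h.exists_queryProb_ge⟩

theorem exists_one_le_mul_pow {p : ℝ} (hp : p ∈ Set.Ioo (0 : ℝ) 1) {i : ℕ} (hi : i ≠ 0) :
    ∃ X : ℕ, 1 ≤ p * (X : ℝ) ^ i ∧ (X : ℝ) ≤ 2 * p ^ (-(i : ℝ)⁻¹) := by
  have hceil := Nat.le_ceil (p ^ (-(i : ℝ)⁻¹))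
  have hone : 1 ≤ p ^ (-(i : ℝ)⁻¹) :=
    Real.one_le_rpow_of_pos_of_le_one_of_nonpos hp.1 hp.2.le (by simp)
  refine ⟨⌈p ^ (-(i : ℝ)⁻¹)⌉₊, ?_, by linarith [Nat.ceil_lt_add_one (zero_le_one.trans hone)]⟩
  calc 1 = p * (p ^ (-(i : ℝ)⁻¹)) ^ i := by
        rw [Real.rpow_neg hp.1.le, inv_pow, Real.rpow_inv_natCast_pow hp.1.le hi,
          mul_inv_cancel₀ hp.1.ne']
    _ ≤ _ := by have := hp.1; gcongr

theorem fQuery_isBigO {C i j : ℕ} (hi : i ≠ 0)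
    (h : ∀ p ∈ unitInterval, ∀ X : ℕ, 1 ≤ p * (X : ℝ) ^ i →
      Winnable p H (C * X ^ j) ∅ ∅ (1 / 2)) :
    (fun p => (fQuery H p : ℝ)) =O[𝓟 (Set.Ioo 0 1)] fun p => p ^ (-(j : ℝ) / i) := by
  refine isBigO_principal.2 ⟨C * 2 ^ j, fun p hp => ?_⟩
  obtain ⟨X, hX, hXle⟩ := exists_one_le_mul_pow hp hi
  rw [Real.norm_of_nonneg (Nat.cast_nonneg _), Real.norm_of_nonneg (Real.rpow_nonneg hp.1.le _)]
  calc (fQuery H p : ℝ) ≤ C * X ^ j := mod_cast (h p ⟨hp.1.le, hp.2.le⟩ X hX).fQuery_le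
    _ ≤ C * (2 * p ^ (-(i : ℝ)⁻¹)) ^ j := by gcongr
    _ = C * 2 ^ j * p ^ (-(j : ℝ) / i) := by
      rw [mul_pow, ← Real.rpow_mul_natCast hp.1.le]
      ring_nf

end FQuery

section Lower

variable {V W : Type*}

/-- Along the history `h`, the strategy `Q` finds images of the edges in `R`, in this order, under
some map that agrees with `φ` on `D`. -/
def Realizable (Q : List Bool → Sym2 W) (D : Finset V) (φ : V → W) (R : List (Sym2 V))
    (h : List Bool) : Prop :=
  ∃ f : V → W, Set.EqOn f φ D ∧ (R.map (Sym2.map f)).Sublist (successes Q h)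

variable {Q : List Bool → Sym2 W}

theorem Realizable.of_cons_true {D : Finset V} {φ : V → W} {e : Sym2 V}
    {R : List (Sym2 V)} {h : List Bool} (hR : Realizable Q D φ (e :: R) (true :: h)) :
    Realizable (fun l => Q (true :: l)) D φ (e :: R) h ∨
      ∃ f : V → W, Set.EqOn f φ D ∧ Sym2.map f e = Q [] ∧
        (R.map (Sym2.map f)).Sublist (successes (fun l => Q (true :: l)) h) := by
  obtain ⟨f, hf, hsub⟩ := hR
  rw [successes, List.map_cons, List.cons_sublist_cons'] at hsub
  exact hsub.imp (fun h => ⟨f, hf, h⟩) fun ⟨heq, h⟩ => ⟨f, hf, heq, h⟩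

theorem exists_perm_map_sublist {α β : Type*} {g : α → β} (hg : Function.Injective g)
    {E : List α} (hE : E.Nodup) {L : List β} (h : ∀ e ∈ E, g e ∈ L) :
    ∃ E' : List α, E'.Perm E ∧ (E'.map g).Sublist L := by
  obtain ⟨l, hl, hlL⟩ := List.subperm_of_subset (hE.map hg)
    (List.forall_mem_map.2 h : ∀ e ∈ E.map g, e ∈ L)
  obtain ⟨E', rfl⟩ : l ∈ Set.range (List.map g) := by
    rw [Set.range_list_map]
    intro x hx
    obtain ⟨e, -, rfl⟩ := List.mem_map.1 (hl.subset hx)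
    exact ⟨e, rfl⟩
  exact ⟨E', (List.map_perm_map_iff hg).1 hl, hlL⟩

theorem exists_realizable_of_isContained {H : SimpleGraph V} [Fintype H.edgeSet] {h : List Bool}
    (φ : V → W) (hcopy : H ⊑ fromEdgeSet {e | e ∈ successes Q h}) :
    ∃ E : List (Sym2 V), E.Perm H.edgeFinset.toList ∧ Realizable Q ∅ φ E h := by
  obtain ⟨f, hf, hadj⟩ := isContained_fromEdgeSet_iff.1 hcopy
  obtain ⟨E, hE, hsub⟩ := exists_perm_map_sublist (Sym2.map.injective hf)
    H.edgeFinset.nodup_toList (L := successes Q h) fun e he => by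
      induction e with | _ u v
      exact hadj u v (by simpa using he)
  exact ⟨E, hE, f, by simp, hsub⟩

theorem Realizable.sublist {D : Finset V} {φ : V → W} {R R' : List (Sym2 V)} {h : List Bool}
    (hR : Realizable Q D φ R h) (hR' : R'.Sublist R) : Realizable Q D φ R' h :=
  let ⟨f, hf, hsub⟩ := hR
  ⟨f, hf, (hR'.map _).trans hsub⟩

variable [DecidableEq V]

/-- The number of edges in the list `R` that, at the moment they are reached, have an endpoint
which belongs neither to `D` nor to an earlier edge. -/
def opens : Finset V → List (Sym2 V) → ℕ
  | _, [] => 0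
  | D, e :: R => opens (D ∪ e.toFinset) R + if e.toFinset ⊆ D then 0 else 1

theorem exists_eqOn_union_toFinset (D : Finset V) (φ : V → W) (e : Sym2 V) (q : Sym2 W) :
    ∃ φ₁ φ₂ : V → W, ∀ f : V → W, Set.EqOn f φ D → Sym2.map f e = q →
      Set.EqOn f φ₁ ↑(D ∪ e.toFinset) ∨ Set.EqOn f φ₂ ↑(D ∪ e.toFinset) := by
  induction e with | _ u v
  induction q with | _ x y
  refine ⟨Function.update (Function.update φ u x) v y,
    Function.update (Function.update φ u y) v x, fun f hf hfe => ?_⟩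
  have extend {a b : W} (ha : f u = a) (hb : f v = b) :
      Set.EqOn f (Function.update (Function.update φ u a) v b) ↑(D ∪ s(u, v).toFinset) := by
    intro w hw
    simp only [Sym2.toFinset_mk_eq, Finset.coe_union, Set.mem_union, Finset.mem_coe,
      Finset.mem_insert, Finset.mem_singleton] at hw
    simp only [Function.update_apply]
    split_ifs with hwv hwu
    · rw [hwv, hb]
    · rw [hwu, ha]
    · exact hf (by tauto)
  exact (Sym2.eq_iff.1 hfe).imp (fun h => extend h.1 h.2) fun h => extend h.1 h.2

theorem map_eq_of_toFinset_subset {D : Finset V} {f φ : V → W} {e : Sym2 V} (hf : Set.EqOn f φ D)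
    (he : e.toFinset ⊆ D) : Sym2.map f e = Sym2.map φ e :=
  Sym2.map_congr fun _ hv => hf (he (Sym2.mem_toFinset.2 hv))

variable {p : ℝ}

theorem prob_realizable_succ_le (hp : p ∈ unitInterval) {n : ℕ} {D : Finset V} {φ : V → W}
    {e : Sym2 V} {R : List (Sym2 V)} {r s : ℝ}
    (hr : ∀ b, prob p n (Realizable (fun l => Q (b :: l)) D φ (e :: R)) ≤ r)
    (hs : ∀ φ', prob p n (Realizable (fun l => Q (true :: l)) (D ∪ e.toFinset) φ' R) ≤ s) :
    prob p (n + 1) (Realizable Q D φ (e :: R)) ≤ r + 2 * (p * s) := by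
  obtain ⟨φ₁, φ₂, hφ⟩ := exists_eqOn_union_toFinset D φ e (Q [])
  have htrue : prob p n (fun h => Realizable Q D φ (e :: R) (true :: h)) ≤ r + (s + s) := by
    calc _ ≤ prob p n (fun h => Realizable (fun l => Q (true :: l)) D φ (e :: R) h ∨
          (Realizable (fun l => Q (true :: l)) (D ∪ e.toFinset) φ₁ R h ∨
            Realizable (fun l => Q (true :: l)) (D ∪ e.toFinset) φ₂ R h)) :=
          prob_mono hp n fun h hR => hR.of_cons_true.imp_right fun ⟨f, hf, hfe, hsub⟩ =>
            (hφ f hf hfe).imp (fun h => ⟨f, h, hsub⟩) fun h => ⟨f, h, hsub⟩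
      _ ≤ r + (s + s) := (prob_or_le hp n _ _).trans
          (add_le_add (hr true) ((prob_or_le hp n _ _).trans (add_le_add (hs φ₁) (hs φ₂))))
  have h₁ := mul_le_mul_of_nonneg_left htrue hp.1
  have h₀ := mul_le_mul_of_nonneg_left (hr false) (sub_nonneg.2 hp.2)
  calc _ ≤ p * (r + (s + s)) + (1 - p) * r := add_le_add h₁ h₀
    _ = _ := by ring

theorem not_realizable_of_forall_ne {D : Finset V} {φ : V → W} {e : Sym2 V} {R : List (Sym2 V)}
    (he : e.toFinset ⊆ D) (hne : ∀ h, Q h ≠ Sym2.map φ e) (h : List Bool) :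
    ¬ Realizable Q D φ (e :: R) h := by
  rintro ⟨f, hf, hsub⟩
  obtain ⟨t, -, ht, -⟩ := mem_successes.1 (hsub.subset List.mem_cons_self)
  exact hne _ (ht.trans (map_eq_of_toFinset_subset hf he))

theorem prob_realizable_succ_le_of_subset (hp : p ∈ unitInterval) (hQ : ValidBuilder Q) {n : ℕ}
    {D : Finset V} {φ : V → W} {e : Sym2 V} {R : List (Sym2 V)} {s : ℝ} (he : e.toFinset ⊆ D)
    (hr : ∀ b, prob p n (Realizable (fun l => Q (b :: l)) D φ (e :: R)) ≤ p * s)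
    (hs : prob p n (Realizable (fun l => Q (true :: l)) D φ R) ≤ s) :
    prob p (n + 1) (Realizable Q D φ (e :: R)) ≤ p * s := by
  rw [prob]
  by_cases heq : Sym2.map φ e = Q []
  · have hlost (b : Bool) (h : List Bool) : ¬ Realizable (fun l => Q (b :: l)) D φ (e :: R) h :=
      not_realizable_of_forall_ne he (fun h => heq ▸ ((validBuilder_iff.1 hQ).2 b).2 h) h
    have hfalse (h : List Bool) : ¬ Realizable Q D φ (e :: R) (false :: h) := hlost false h
    simp only [hfalse, prob_const, if_false, mul_zero, add_zero]
    refine mul_le_mul_of_nonneg_left ((prob_mono hp n fun h hR => ?_).trans hs) hp.1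
    obtain ⟨f, hf, -, hsub⟩ := hR.of_cons_true.resolve_left (hlost true h)
    exact ⟨f, hf, hsub⟩
  · have htrue : prob p n (fun h => Realizable Q D φ (e :: R) (true :: h)) ≤ p * s :=
      (prob_mono hp n fun h hR => hR.of_cons_true.resolve_right fun ⟨f, hf, hfe, _⟩ =>
        heq (hfe ▸ (map_eq_of_toFinset_subset hf he).symm)).trans (hr true)
    have h₁ := mul_le_mul_of_nonneg_left htrue hp.1
    have h₀ := mul_le_mul_of_nonneg_left (hr false) (sub_nonneg.2 hp.2)
    calc _ ≤ p * (p * s) + (1 - p) * (p * s) := add_le_add h₁ h₀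
      _ = p * s := by ring

/- The image of the next edge is either determined by the partial embedding, and then there is only
one query that can find it, or it is not, and then any query can find it, in two orientations. -/
theorem prob_realizable_le (hp : p ∈ unitInterval) (hQ : ValidBuilder Q) (n : ℕ) (D : Finset V)
    (φ : V → W) (R : List (Sym2 V)) :
    prob p n (Realizable Q D φ R) ≤ (2 * n) ^ opens D R * p ^ R.length := by
  have hp0 := hp.1
  induction n generalizing Q D φ R with
  | zero =>
    cases R with
    | nil => simpa [opens] using (prob_mem_unitInterval hp 0 _).2
    | cons e R =>
      rw [prob, if_neg (by simp [Realizable, successes])]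
      positivity
  | succ n ih =>
    cases R with
    | nil => simpa [opens] using (prob_mem_unitInterval hp (n + 1) _).2
    | cons e R =>
      have ih (b : Bool) := ih ((validBuilder_iff.1 hQ).2 b).1
      by_cases he : e.toFinset ⊆ D
      · have hopens : opens D (e :: R) = opens D R := by
          rw [opens, if_pos he, Finset.union_eq_left.2 he, add_zero]
        calc _ ≤ p * ((2 * n) ^ opens D R * p ^ R.length) :=
              prob_realizable_succ_le_of_subset hp hQ he
                (fun b => (ih b _ _ _).trans_eq (by rw [hopens, List.length_cons]; ring))
                (ih true _ _ _)
          _ ≤ p * ((2 * (n + 1 : ℕ)) ^ opens D R * p ^ R.length) := by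
            gcongr
            exact n.le_succ
          _ = _ := by rw [hopens, List.length_cons]; ring
      · rw [opens, if_neg he, List.length_cons]
        set o := opens (D ∪ e.toFinset) R
        calc _ ≤ (2 * n) ^ (o + 1) * p ^ (R.length + 1) + 2 * (p * ((2 * n) ^ o * p ^ R.length)) :=
              prob_realizable_succ_le hp
                (fun b => (ih b _ _ _).trans_eq (by rw [opens, if_neg he, List.length_cons]))
                fun φ' => ih true _ _ _
          _ = (2 * n) ^ o * (2 * (n + 1 : ℕ)) * p ^ (R.length + 1) := by push_cast; ring
          _ ≤ (2 * (n + 1 : ℕ)) ^ o * (2 * (n + 1 : ℕ)) * p ^ (R.length + 1) := by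
            gcongr
            exact n.le_succ
          _ = _ := by ring

theorem queryProb_le {H : SimpleGraph V} [Fintype H.edgeSet] {a l : ℕ}
    (hord : ∀ E : List (Sym2 V), E.Perm H.edgeFinset.toList →
      ∃ L, L.Sublist E ∧ opens ∅ L ≤ a ∧ l ≤ L.length)
    (hp : p ∈ unitInterval) {Q : List Bool → Sym2 ℕ} (hQ : ValidBuilder Q) {N : ℕ} (hN : N ≠ 0) :
    queryProb H Q N p ≤ H.edgeFinset.card.factorial * ((2 * N) ^ a * p ^ l) := by
  choose! L hL hopens hlen using hord
  set T := H.edgeFinset.toList.permutations.toFinset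
  have hT (E : List (Sym2 V)) : E ∈ T ↔ E.Perm H.edgeFinset.toList := by simp [T]
  have hN1 : (1 : ℝ) ≤ 2 * N := by
    have : (1 : ℝ) ≤ N := mod_cast Nat.one_le_iff_ne_zero.2 hN
    linarith
  have hterm (E : List (Sym2 V)) (hE : E ∈ T) :
      prob p N (Realizable Q ∅ (fun _ => 0) (L E)) ≤ (2 * N) ^ a * p ^ l := by
    rw [hT] at hE
    exact (prob_realizable_le hp hQ N _ _ _).trans (mul_le_mul
      (pow_le_pow_right₀ hN1 (hopens E hE)) (pow_le_pow_of_le_one hp.1 hp.2 (hlen E hE))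
      (pow_nonneg hp.1 _) (by positivity))
  rw [queryProb_eq_prob]
  calc _ ≤ prob p N fun h => ∃ E ∈ T,
        Realizable Q ∅ (fun _ => 0) (L E) h := prob_mono hp N fun h hcopy => by
          obtain ⟨E, hE, hR⟩ := exists_realizable_of_isContained (fun _ => 0) hcopy
          exact ⟨E, (hT E).2 hE, hR.sublist (hL E hE)⟩
    _ ≤ ∑ E ∈ T, prob p N (Realizable Q ∅ (fun _ => 0) (L E)) :=
        prob_exists_le hp N _ _
    _ ≤ T.card • ((2 * N) ^ a * p ^ l) := Finset.sum_le_card_nsmul _ _ _ hterm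
    _ = _ := by
      rw [List.toFinset_card_of_nodup (List.nodup_permutations _ H.edgeFinset.nodup_toList),
        List.length_permutations, Finset.length_toList, nsmul_eq_mul]

open Asymptotics Filter in
theorem rpow_isBigO_fQuery {H : SimpleGraph V} [Fintype H.edgeSet] (hH : H ≠ ⊥)
    {a l : ℕ} (ha : a ≠ 0)
    (hord : ∀ E : List (Sym2 V), E.Perm H.edgeFinset.toList →
      ∃ L, L.Sublist E ∧ opens ∅ L ≤ a ∧ l ≤ L.length)
    (hwin : ∀ p ∈ Set.Ioo (0 : ℝ) 1, ∃ n, Winnable p H n ∅ ∅ (1 / 2)) :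
    (fun p : ℝ => p ^ (-(l : ℝ) / a)) =O[𝓟 (Set.Ioo 0 1)] fun p => (fQuery H p : ℝ) := by
  refine isBigO_principal.2 ⟨4 * H.edgeFinset.card.factorial, fun p hp => ?_⟩
  have hp0 := hp.1
  have hfact : (1 : ℝ) ≤ H.edgeFinset.card.factorial := mod_cast Nat.factorial_pos _
  obtain ⟨n, hn⟩ := hwin p hp
  obtain ⟨Q, hQ, hhalf⟩ := hn.exists_queryProb_fQuery_ge
  set N := fQuery H p
  have hN : N ≠ 0 := fun h => by
    rw [h, queryProb_zero hH] at hhalf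
    norm_num at hhalf
  have hle := hhalf.trans (queryProb_le hord ⟨hp.1.le, hp.2.le⟩ hQ hN)
  rw [Real.norm_of_nonneg (by positivity), Real.norm_of_nonneg (Nat.cast_nonneg _)]
  refine le_of_pow_le_pow_left₀ ha (by positivity) ?_
  calc (p ^ (-(l : ℝ) / a)) ^ a = (p ^ l)⁻¹ := by
        rw [← Real.rpow_mul_natCast hp0.le, div_mul_cancel₀ _ (mod_cast ha), Real.rpow_neg hp0.le,
          Real.rpow_natCast]
    _ ≤ 2 * H.edgeFinset.card.factorial * (2 * N) ^ a := by
      rw [inv_le_iff_one_le_mul₀ (by positivity)]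
      linarith
    _ ≤ (2 * H.edgeFinset.card.factorial) ^ a * (2 * N) ^ a := by
      gcongr
      exact le_self_pow₀ (by linarith) ha
    _ = (4 * H.edgeFinset.card.factorial * N) ^ a := by rw [← mul_pow]; ring_nf

theorem opens_cons_add_card_le (D : Finset V) (e : Sym2 V) (R : List (Sym2 V)) :
    opens D (e :: R) + D.card ≤ opens (D ∪ e.toFinset) R + (D ∪ e.toFinset).card := by
  rw [opens]
  split_ifs with he
  · rw [Finset.union_eq_left.2 he, add_zero]
  · have := Finset.card_lt_card (Finset.ssubset_iff_subset_ne.2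
      ⟨Finset.subset_union_left, fun h => he (Finset.union_eq_left.1 h.symm)⟩ :
        D ⊂ D ∪ e.toFinset)
    omega

theorem opens_cons_add_card_lt {D : Finset V} {e : Sym2 V} (he : ¬ e.IsDiag)
    (hD : Disjoint e.toFinset D) (R : List (Sym2 V)) :
    opens D (e :: R) + D.card < opens (D ∪ e.toFinset) R + (D ∪ e.toFinset).card := by
  rw [opens, Finset.card_union_of_disjoint hD.symm, Sym2.card_toFinset_of_not_isDiag e he]
  split_ifs <;> omega

theorem opens_add_card_le [Fintype V] (D : Finset V) (R : List (Sym2 V)) :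
    opens D R + D.card ≤ Fintype.card V := by
  induction R generalizing D with
  | nil => simpa [opens] using D.card_le_univ
  | cons e R ih => exact (opens_cons_add_card_le D e R).trans (ih _)

theorem opens_append_cons_add_card_lt [Fintype V] {D : Finset V} {e : Sym2 V} (he : ¬ e.IsDiag)
    (hD : Disjoint e.toFinset D) {P : List (Sym2 V)}
    (hP : ∀ f ∈ P, Disjoint e.toFinset f.toFinset) (R : List (Sym2 V)) :
    opens D (P ++ e :: R) + D.card < Fintype.card V := by
  induction P generalizing D with
  | nil => exact (opens_cons_add_card_lt he hD R).trans_le (opens_add_card_le _ R)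
  | cons f P ih =>
    rw [List.forall_mem_cons] at hP
    exact (opens_cons_add_card_le D f _).trans_lt
      (ih (Finset.disjoint_union_right.2 ⟨hD, hP.1⟩) hP.2)

theorem opens_empty_lt_card [Fintype V] {E : List (Sym2 V)} (hE : E ≠ [])
    (hdiag : ∀ e ∈ E, ¬ e.IsDiag) : opens ∅ E < Fintype.card V := by
  obtain ⟨e, R, rfl⟩ := List.exists_cons_of_ne_nil hE
  have hfirst := opens_cons_add_card_lt (hdiag e List.mem_cons_self)
    (Finset.disjoint_empty_right _) R
  exact hfirst.trans_le (opens_add_card_le _ R)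

theorem opens_empty_append_cons_lt [Fintype V] {P : List (Sym2 V)} {e : Sym2 V} (hPne : P ≠ [])
    (hdiag : ∀ f ∈ P, ¬ f.IsDiag) (he : ¬ e.IsDiag)
    (hP : ∀ f ∈ P, Disjoint e.toFinset f.toFinset) (R : List (Sym2 V)) :
    opens ∅ (P ++ e :: R) + 1 < Fintype.card V := by
  obtain ⟨f, P, rfl⟩ := List.exists_cons_of_ne_nil hPne
  rw [List.forall_mem_cons] at hdiag hP
  have hfirst := opens_cons_add_card_lt hdiag.1 (Finset.disjoint_empty_right _) (P ++ e :: R)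
  have hrest := opens_append_cons_add_card_lt he
    (Finset.disjoint_union_right.2 ⟨Finset.disjoint_empty_right _, hP.1⟩) hP.2 R
  rw [Finset.card_empty] at hfirst
  rw [List.cons_append]
  omega

theorem exists_eq_append_cons_of_not_pairwise {α : Type*} {r : α → α → Prop} {L : List α}
    (hL : ¬ L.Pairwise r) :
    ∃ P e R, L = P ++ e :: R ∧ P.Pairwise r ∧ ∃ f ∈ P, ¬ r f e := by
  induction L using List.reverseRecOn with
  | nil => exact absurd List.Pairwise.nil hL
  | append_singleton L e ih =>
    by_cases hLr : L.Pairwise r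
    · refine ⟨L, e, [], rfl, hLr, ?_⟩
      by_contra! h
      exact hL (List.pairwise_append.2 ⟨hLr, List.pairwise_singleton r e, by simpa using h⟩)
    · obtain ⟨P, g, R, rfl, hP, hg⟩ := ih hLr
      exact ⟨P, g, R ++ [e], by simp, hP, hg⟩

theorem eq_of_not_disjoint_of_not_disjoint {a b x y : V} {g : Sym2 V}
    (h : Disjoint s(a, b).toFinset s(x, y).toFinset) (hab : ¬ Disjoint s(a, b).toFinset g.toFinset)
    (hxy : ¬ Disjoint s(x, y).toFinset g.toFinset) :
    g = s(a, x) ∨ g = s(a, y) ∨ g = s(b, x) ∨ g = s(b, y) := by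
  induction g with | _ u v
  simp only [Sym2.toFinset_mk_eq, Finset.disjoint_left, Finset.mem_insert, Finset.mem_singleton,
    Sym2.eq_iff] at h hab hxy ⊢
  grind

/- Only the edges joining the two disjoint edges `e` and `f` meet both of them; these four edges
form a cycle, which consists of two pairs of disjoint edges. -/
theorem card_le_two_of_not_disjoint {T : Finset (Sym2 V)} {e f : Sym2 V}
    (hediag : ¬ e.IsDiag) (hfdiag : ¬ f.IsDiag) (hef : Disjoint e.toFinset f.toFinset)
    (hT : ∀ g ∈ T, ∀ h ∈ T, ¬ Disjoint g.toFinset h.toFinset)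
    (he : ∀ g ∈ T, ¬ Disjoint e.toFinset g.toFinset)
    (hf : ∀ g ∈ T, ¬ Disjoint f.toFinset g.toFinset) : T.card ≤ 2 := by
  induction e with | _ a b
  induction f with | _ x y
  have hmem (g : Sym2 V) (hg : g ∈ T) :=
    eq_of_not_disjoint_of_not_disjoint hef (he g hg) (hf g hg)
  have hopp : Disjoint s(a, x).toFinset s(b, y).toFinset ∧
      Disjoint s(a, y).toFinset s(b, x).toFinset := by
    simp only [Sym2.toFinset_mk_eq, Finset.disjoint_left, Finset.mem_insert, Finset.mem_singleton,
      Sym2.mk_isDiag_iff] at hediag hfdiag hef ⊢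
    grind
  have hax : s(a, x) ∈ T → s(b, y) ∉ T := fun h h' => hT _ h _ h' hopp.1
  have hay : s(a, y) ∈ T → s(b, x) ∉ T := fun h h' => hT _ h _ h' hopp.2
  calc T.card ≤ Finset.card {if s(a, x) ∈ T then s(a, x) else s(b, y),
        if s(a, y) ∈ T then s(a, y) else s(b, x)} := Finset.card_le_card fun g hg => by
          rcases hmem g hg with rfl | rfl | rfl | rfl <;> grind
    _ ≤ 2 := Finset.card_le_two

theorem not_disjoint_of_pairwise {E : List (Sym2 V)}
    (hE : E.Pairwise fun e f => ¬ Disjoint e.toFinset f.toFinset) {e f : Sym2 V} (he : e ∈ E)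
    (hf : f ∈ E) : ¬ Disjoint e.toFinset f.toFinset :=
  have : Std.Symm fun e f : Sym2 V => ¬ Disjoint e.toFinset f.toFinset :=
    ⟨fun _ _ hef hfe => hef hfe.symm⟩
  hE.forall_of_forall (fun e _ => by simp) he hf

theorem exists_sublist_opens_lt [Fintype V] {E : List (Sym2 V)} (hE : E.Nodup)
    (hdiag : ∀ e ∈ E, ¬ e.IsDiag) {e f : Sym2 V} (he : e ∈ E) (hf : f ∈ E)
    (hef : Disjoint e.toFinset f.toFinset) :
    ∃ L : List (Sym2 V), L.Sublist E ∧ opens ∅ L + 1 < Fintype.card V ∧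
      E.length ≤ L.length + 2 := by
  obtain ⟨P, g, R, rfl, hP, h, hhP, hhg⟩ := exists_eq_append_cons_of_not_pairwise
    fun hE => not_disjoint_of_pairwise hE he hf hef
  rw [not_not] at hhg
  rw [List.forall_mem_append, List.forall_mem_cons] at hdiag
  set P₁ := P.filter fun k => Disjoint g.toFinset k.toFinset
  set P₂ := P.filter fun k => ¬ Disjoint g.toFinset k.toFinset
  have hP₁ (k : Sym2 V) (hk : k ∈ P₁) : Disjoint g.toFinset k.toFinset :=
    of_decide_eq_true (List.mem_filter.1 hk).2
  have hP₂ (k : Sym2 V) (hk : k ∈ P₂.toFinset) : k ∈ P ∧ ¬ Disjoint g.toFinset k.toFinset :=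
    (List.mem_filter.1 (List.mem_toFinset.1 hk)).imp_right of_decide_eq_true
  have hcard : P₂.length ≤ 2 := by
    rw [← List.toFinset_card_of_nodup ((List.nodup_append.1 hE).1.filter _)]
    exact card_le_two_of_not_disjoint (hdiag.1 h hhP) hdiag.2.1 hhg
      (fun k hk l hl => not_disjoint_of_pairwise hP (hP₂ k hk).1 (hP₂ l hl).1)
      (fun k hk => not_disjoint_of_pairwise hP hhP (hP₂ k hk).1) fun k hk => (hP₂ k hk).2
  refine ⟨P₁ ++ g :: R, List.filter_sublist.append_right _,
    opens_empty_append_cons_lt (List.ne_nil_of_mem (a := h) ?_)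
      (fun k hk => hdiag.1 k (List.mem_of_mem_filter hk)) hdiag.2.1 hP₁ R, ?_⟩
  · exact List.mem_filter.2 ⟨hhP, by simpa using hhg.symm⟩
  · have := P.length_eq_length_filter_add fun k => decide (Disjoint g.toFinset k.toFinset)
    simp only [P₁, P₂, decide_not, List.length_append, List.length_cons] at hcard ⊢
    omega

end Lower

section CompleteGraph

open Asymptotics Filter

theorem fQuery_isTheta {V : Type*} [DecidableEq V] {H : SimpleGraph V} [Fintype H.edgeSet]
    (hH : H ≠ ⊥) {C i j a l : ℕ} (hi : i ≠ 0) (ha : a ≠ 0)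
    (hwin : ∀ p ∈ unitInterval, ∀ X : ℕ, 1 ≤ p * (X : ℝ) ^ i →
      Winnable p H (C * X ^ j) ∅ ∅ (1 / 2))
    (hord : ∀ E : List (Sym2 V), E.Perm H.edgeFinset.toList →
      ∃ L, L.Sublist E ∧ opens ∅ L ≤ a ∧ l ≤ L.length)
    {α : ℝ} (hα : -(j : ℝ) / i = α) (hα' : -(l : ℝ) / a = α) :
    (fun p => (fQuery H p : ℝ)) =Θ[𝓟 (Set.Ioo 0 1)] fun p => p ^ α := by
  refine ⟨hα ▸ fQuery_isBigO hi hwin, hα' ▸ rpow_isBigO_fQuery hH ha hord fun p hp => ?_⟩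
  obtain ⟨X, hX, -⟩ := exists_one_le_mul_pow hp hi
  exact ⟨_, hwin p ⟨hp.1.le, hp.2.le⟩ X hX⟩

variable {m : ℕ} {E : List (Sym2 (Fin m))}

theorem mem_iff_of_perm_edgeFinset (hE : E.Perm (K m).edgeFinset.toList) {e : Sym2 (Fin m)} :
    e ∈ E ↔ ¬ e.IsDiag := by
  simp [hE.mem_iff]

theorem length_of_perm_edgeFinset (hE : E.Perm (K m).edgeFinset.toList) :
    E.length = m.choose 2 := by
  rw [hE.length_eq, Finset.length_toList, SimpleGraph.card_edgeFinset_top_eq_card_choose_two,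
    Fintype.card_fin]

theorem exists_sublist_opens_le_of_perm_edgeFinset (hm : 4 ≤ m)
    (hE : E.Perm (K m).edgeFinset.toList) :
    ∃ L, L.Sublist E ∧ opens ∅ L ≤ m - 2 ∧ m.choose 2 - 2 ≤ L.length := by
  have hmem (u v : Fin m) (huv : u ≠ v) : s(u, v) ∈ E := by
    simpa [mem_iff_of_perm_edgeFinset hE] using huv
  obtain ⟨L, hL, hopens, hlen⟩ := exists_sublist_opens_lt
    (hE.nodup_iff.2 (Finset.nodup_toList _)) (fun e => (mem_iff_of_perm_edgeFinset hE).1)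
    (hmem ⟨0, by omega⟩ ⟨1, by omega⟩ (by simp)) (hmem ⟨2, by omega⟩ ⟨3, by omega⟩ (by simp))
    (by simp [Sym2.toFinset_mk_eq])
  rw [Fintype.card_fin] at hopens
  rw [length_of_perm_edgeFinset hE] at hlen
  exact ⟨L, hL, by omega, by omega⟩

theorem fQuery_K_three_isTheta :
    (fun p => (fQuery (K 3) p : ℝ)) =Θ[𝓟 (Set.Ioo 0 1)] fun p => p ^ (-(3 : ℝ) / 2) := by
  refine fQuery_isTheta (i := 2) (j := 3) (a := 2) (l := 3) top_ne_bot two_ne_zero two_ne_zero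
    (fun p hp X hX => winnable_K_three_half hp hX) (fun E hE => ⟨E, List.Sublist.refl E, ?_⟩)
    (by norm_num) (by norm_num)
  have hlen : E.length = 3 := length_of_perm_edgeFinset hE
  exact ⟨Nat.lt_succ_iff.1 (opens_empty_lt_card (List.ne_nil_of_length_eq_add_one hlen)
    fun e => (mem_iff_of_perm_edgeFinset hE).1), hlen.ge⟩

theorem fQuery_K_four_isTheta :
    (fun p => (fQuery (K 4) p : ℝ)) =Θ[𝓟 (Set.Ioo 0 1)] fun p => p ^ (-(2 : ℝ)) :=
  fQuery_isTheta (i := 1) (j := 2) (a := 2) (l := 4) top_ne_bot one_ne_zero two_ne_zero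
    (fun p hp X hX => winnable_K_four_half hp (by rwa [pow_one] at hX))
    (fun _ hE => exists_sublist_opens_le_of_perm_edgeFinset le_rfl hE) (by norm_num) (by norm_num)

theorem fQuery_K_five_isTheta :
    (fun p => (fQuery (K 5) p : ℝ)) =Θ[𝓟 (Set.Ioo 0 1)] fun p => p ^ (-(8 : ℝ) / 3) :=
  fQuery_isTheta (i := 3) (j := 8) (a := 3) (l := 8) top_ne_bot three_ne_zero three_ne_zero
    (fun p hp X hX => winnable_K_five_half hp hX)
    (fun _ hE => exists_sublist_opens_le_of_perm_edgeFinset (by norm_num) hE)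
    (by norm_num) (by norm_num)

theorem exists_forall_mul_le_of_isTheta {α : Type*} {s : Set α} {f g : α → ℝ}
    (h : f =Θ[𝓟 s] g) (hf : ∀ x ∈ s, 0 ≤ f x) (hg : ∀ x ∈ s, 0 ≤ g x) :
    ∃ c C : ℝ, 0 < c ∧ 0 < C ∧ ∀ x ∈ s, c * g x ≤ f x ∧ f x ≤ C * g x := by
  obtain ⟨C, hC, hfg⟩ := h.1.exists_pos
  obtain ⟨c, hc, hgf⟩ := h.2.exists_pos
  rw [isBigOWith_principal] at hfg hgf
  refine ⟨c⁻¹, C, inv_pos.2 hc, hC, fun x hx => ?_⟩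
  have hfg := hfg x hx
  have hgf := hgf x hx
  rw [Real.norm_of_nonneg (hf x hx), Real.norm_of_nonneg (hg x hx)] at hfg hgf
  exact ⟨(inv_mul_le_iff₀ hc).2 hgf, hfg⟩

end CompleteGraph

theorem stmt8 :
    ∃ c C : ℝ, 0 < c ∧ 0 < C ∧ ∀ p : ℝ, p ∈ Set.Ioo (0 : ℝ) 1 →
      (c * p ^ (-(3 : ℝ) / 2) ≤ (fQuery (K 3) p : ℝ) ∧
        (fQuery (K 3) p : ℝ) ≤ C * p ^ (-(3 : ℝ) / 2)) ∧
      (c * p ^ (-(2 : ℝ)) ≤ (fQuery (K 4) p : ℝ) ∧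
        (fQuery (K 4) p : ℝ) ≤ C * p ^ (-(2 : ℝ))) ∧
      (c * p ^ (-(8 : ℝ) / 3) ≤ (fQuery (K 5) p : ℝ) ∧
        (fQuery (K 5) p : ℝ) ≤ C * p ^ (-(8 : ℝ) / 3)) := by
  have hbounds {m : ℕ} {α : ℝ} (h : (fun p => (fQuery (K m) p : ℝ))
      =Θ[Filter.principal (Set.Ioo 0 1)] fun p => p ^ α) := exists_forall_mul_le_of_isTheta h
    (fun _ _ => Nat.cast_nonneg _) (fun _ hp => Real.rpow_nonneg hp.1.le α)
  obtain ⟨c₃, C₃, hc₃, hC₃, h₃⟩ := hbounds fQuery_K_three_isTheta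
  obtain ⟨c₄, C₄, hc₄, -, h₄⟩ := hbounds fQuery_K_four_isTheta
  obtain ⟨c₅, C₅, hc₅, -, h₅⟩ := hbounds fQuery_K_five_isTheta
  refine ⟨min c₃ (min c₄ c₅), max C₃ (max C₄ C₅), by positivity, by positivity, fun p hp => ?_⟩
  have hp0 := hp.1.le
  refine ⟨⟨.trans (by gcongr; simp) (h₃ p hp).1, (h₃ p hp).2.trans (by gcongr; simp)⟩,
    ⟨.trans (by gcongr; simp) (h₄ p hp).1, (h₄ p hp).2.trans (by gcongr; simp)⟩,
    ⟨.trans (by gcongr; simp) (h₅ p hp).1, (h₅ p hp).2.trans (by gcongr; simp)⟩⟩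

end OnlineRamseyGame
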